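/- Let 𝒜 be a collection of subsets of ℝⁿ and V ≥ 0. If for every ε > 0 there exists a packing of 𝒜 into some brick of volume V + ε, then there exists a packing of 𝒜 into a brick of volume V. -/

import Mathlib

/-!
A compactness argument. Translating, every brick may be taken of the form `∏ [0, s m]`.

* If the side lengths `s` stay bounded along a sequence of packings into bricks of volume at most
  `V + 1/(k+1)`, then along an ultrafilter the side lengths, the orthogonal matrices and the
  translation parts all converge. Containment in the brick is a closed condition. Disjointness of
  interiors survives too: if the limiting copies of `A i` and `A j` share an interior point `x`,
  then both preimages of `x` are centres of balls of a fixed radius inside `A i` and `A j`, and the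
  approximating motions move these balls rigidly to balls with centres tending to `x`, so they
  would overlap already before the limit (`exists_limit_packing`).
* If some `A i` has an interior point, it contains a ball, so every side length is bounded below;
  as the volume is bounded, every side length is bounded above.
* If every `A i` has empty interior, disjointness is vacuous and each `A i` can be moved
  independently. All `A i` have diameter at most some `D`, because they fit into one common
  brick, so the sides of every brick can be cut down to length at most `D`
  (`packsInto_truncate`).

The limiting brick may have volume less than `V`; enlarging all its sides by the same amount and
using the intermediate value theorem gives volume exactly `V` (`exists_enlarge`). This needs
`n ≠ 0`; for `n = 0` the hypothesis is contradictory, since the volume is always `1`.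
-/

open Pointwise

noncomputable section

/-- The rigid motion `(θ, ξ)` acting on a point of `ℝⁿ`: `x ↦ ξ + θx`. -/
def rmApply {n : ℕ} (θ : Matrix (Fin n) (Fin n) ℝ) (ξ : EuclideanSpace ℝ (Fin n))
    (x : EuclideanSpace ℝ (Fin n)) : EuclideanSpace ℝ (Fin n) :=
  ξ + (EuclideanSpace.equiv (Fin n) ℝ).symm (θ.mulVec (EuclideanSpace.equiv (Fin n) ℝ x))

/-- `(θ, ξ)` is a packing of the family `A` into the set `C`: each `θ i` is orthogonal,
each repositioned set `σᵢ(Aᵢ)` is contained in `C`, and the repositioned sets have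
pairwise disjoint interiors. -/
def IsPacking {n : ℕ} {ι : Type*} (A : ι → Set (EuclideanSpace ℝ (Fin n)))
    (θ : ι → Matrix (Fin n) (Fin n) ℝ) (ξ : ι → EuclideanSpace ℝ (Fin n))
    (C : Set (EuclideanSpace ℝ (Fin n))) : Prop :=
  (∀ i, θ i ∈ Matrix.orthogonalGroup (Fin n) ℝ) ∧
  (∀ i, rmApply (θ i) (ξ i) '' A i ⊆ C) ∧
  Pairwise fun i j =>
    interior (rmApply (θ i) (ξ i) '' A i) ∩ interior (rmApply (θ j) (ξ j) '' A j) = ∅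

/-- There exists a packing of `A` into `C`. -/
def PacksInto {n : ℕ} {ι : Type*} (A : ι → Set (EuclideanSpace ℝ (Fin n)))
    (C : Set (EuclideanSpace ℝ (Fin n))) : Prop :=
  ∃ θ ξ, IsPacking A θ ξ C

/-- The brick `[a 1, b 1] × ⋯ × [a n, b n]` in `ℝⁿ`. -/
def brick {n : ℕ} (a b : Fin n → ℝ) : Set (EuclideanSpace ℝ (Fin n)) :=
  {x | ∀ m, x m ∈ Set.Icc (a m) (b m)}

open Filter Topology

/-! ### Rigid motions and bricks -/

lemma rmApply_apply {n : ℕ} (θ : Matrix (Fin n) (Fin n) ℝ) (ξ x : EuclideanSpace ℝ (Fin n))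
    (m : Fin n) : rmApply θ ξ x m = ξ m + ∑ l, θ m l * x l := by
  simp [rmApply, Matrix.mulVec, dotProduct]

lemma exists_isometryEquiv {n : ℕ} {θ : Matrix (Fin n) (Fin n) ℝ}
    (hθ : θ ∈ Matrix.orthogonalGroup (Fin n) ℝ) (ξ : EuclideanSpace ℝ (Fin n)) :
    ∃ e : EuclideanSpace ℝ (Fin n) ≃ᵢ EuclideanSpace ℝ (Fin n), ⇑e = rmApply θ ξ := by
  have h1 : θ * θ.transpose = 1 := (Matrix.mem_orthogonalGroup_iff (Fin n) ℝ).1 hθ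
  have h2 : θ.transpose * θ = 1 := (Matrix.mem_orthogonalGroup_iff' (Fin n) ℝ).1 hθ
  refine ⟨IsometryEquiv.mk' (rmApply θ ξ) (fun y => rmApply θ.transpose 0 (y - ξ)) ?_ ?_, rfl⟩
  · intro y
    simp only [rmApply, zero_add, ContinuousLinearEquiv.apply_symm_apply, Matrix.mulVec_mulVec,
      h1, Matrix.one_mulVec, ContinuousLinearEquiv.symm_apply_apply, add_sub_cancel]
  · refine Isometry.of_dist_eq fun x y => ?_
    have key : ∀ v : Fin n → ℝ, ∑ i, (θ.mulVec v i) ^ 2 = ∑ i, v i ^ 2 := by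
      intro v
      have : (θ.mulVec v) ⬝ᵥ (θ.mulVec v) = v ⬝ᵥ v := by
        rw [Matrix.dotProduct_mulVec, ← Matrix.mulVec_transpose, Matrix.mulVec_mulVec, h2,
          Matrix.one_mulVec]
      simpa [dotProduct, sq] using this
    have h3 := key (fun i => x i - y i)
    rw [EuclideanSpace.dist_eq, EuclideanSpace.dist_eq]
    congr 1
    simp only [Real.dist_eq, sq_abs]
    rw [← h3]
    refine Finset.sum_congr rfl fun i _ => ?_
    rw [rmApply_apply, rmApply_apply]
    simp only [Matrix.mulVec, dotProduct, mul_sub, Finset.sum_sub_distrib]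
    ring

lemma ball_subset_image {n : ℕ} {θ : Matrix (Fin n) (Fin n) ℝ}
    (hθ : θ ∈ Matrix.orthogonalGroup (Fin n) ℝ) (ξ : EuclideanSpace ℝ (Fin n))
    {A : Set (EuclideanSpace ℝ (Fin n))} {p : EuclideanSpace ℝ (Fin n)} {r : ℝ}
    (h : Metric.ball p r ⊆ A) : Metric.ball (rmApply θ ξ p) r ⊆ rmApply θ ξ '' A := by
  obtain ⟨e, he⟩ := exists_isometryEquiv hθ ξ
  rw [← he, ← e.image_ball]
  exact Set.image_mono h

lemma exists_ball_of_mem_interior_image {n : ℕ} {θ : Matrix (Fin n) (Fin n) ℝ}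
    (hθ : θ ∈ Matrix.orthogonalGroup (Fin n) ℝ) (ξ : EuclideanSpace ℝ (Fin n))
    {A : Set (EuclideanSpace ℝ (Fin n))} {x : EuclideanSpace ℝ (Fin n)}
    (h : x ∈ interior (rmApply θ ξ '' A)) :
    ∃ p r, 0 < r ∧ rmApply θ ξ p = x ∧ Metric.ball p r ⊆ A := by
  obtain ⟨e, he⟩ := exists_isometryEquiv hθ ξ
  rw [← he] at h ⊢
  obtain ⟨r, hr, hb⟩ := Metric.isOpen_iff.1 isOpen_interior x h
  refine ⟨e.symm x, r, hr, by simp, fun y hy => ?_⟩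
  have hy' : e y ∈ Metric.ball x r := by
    rw [Metric.mem_ball] at hy ⊢
    rwa [← e.apply_symm_apply x, e.dist_eq]
  obtain ⟨z, hz, hzy⟩ := interior_subset (hb hy')
  rwa [← e.injective hzy]

lemma isCompact_brick {n : ℕ} (a b : Fin n → ℝ) : IsCompact (brick a b) := by
  have : brick a b = (EuclideanSpace.equiv (Fin n) ℝ).toHomeomorph ⁻¹' Set.Icc a b := by
    ext x
    simp [brick, Pi.le_def, forall_and]
  rw [this, Homeomorph.isCompact_preimage]
  exact isCompact_Icc

lemma PacksInto.mono {n : ℕ} {ι : Type*} {A : ι → Set (EuclideanSpace ℝ (Fin n))}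
    {C C' : Set (EuclideanSpace ℝ (Fin n))} (h : PacksInto A C) (hC : C ⊆ C') :
    PacksInto A C' := by
  obtain ⟨θ, ξ, h1, h2, h3⟩ := h
  exact ⟨θ, ξ, h1, fun i => (h2 i).trans hC, h3⟩

lemma PacksInto.translate {n : ℕ} {ι : Type*} {A : ι → Set (EuclideanSpace ℝ (Fin n))}
    {a b : Fin n → ℝ} (h : PacksInto A (brick a b)) : PacksInto A (brick 0 (b - a)) := by
  obtain ⟨θ, ξ, h1, h2, h3⟩ := h
  let c : EuclideanSpace ℝ (Fin n) := WithLp.toLp 2 (-a)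
  have him : ∀ i, rmApply (θ i) (ξ i + c) '' A i =
      Homeomorph.addRight c '' (rmApply (θ i) (ξ i) '' A i) := by
    intro i
    rw [Set.image_image]
    refine Set.image_congr fun x _ => ?_
    simp only [rmApply, Homeomorph.coe_addRight]
    abel
  refine ⟨θ, fun i => ξ i + c, h1, fun i => ?_, fun i j hij => ?_⟩
  · rw [him]
    rintro _ ⟨y, hy, rfl⟩ m
    have := h2 i hy m
    simp only [Set.mem_Icc] at this
    simp only [c, Homeomorph.coe_addRight, PiLp.add_apply, Pi.neg_apply, Set.mem_Icc,
      Pi.zero_apply, Pi.sub_apply]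
    constructor <;> linarith
  · have h4 := h3 hij
    simp only at h4 ⊢
    rw [him, him, ← Homeomorph.image_interior, ← Homeomorph.image_interior,
      ← Set.image_inter (Homeomorph.addRight c).injective, h4, Set.image_empty]

/-! ### Passing to the limit -/

lemma exists_tendsto_orthogonal {n : ℕ} (U : Ultrafilter ℕ)
    (θ : ℕ → Matrix (Fin n) (Fin n) ℝ) (hθ : ∀ k, θ k ∈ Matrix.orthogonalGroup (Fin n) ℝ) :
    ∃ T ∈ Matrix.orthogonalGroup (Fin n) ℝ, Tendsto θ U (𝓝 T) := by
  have hc : IsCompact (Set.pi Set.univ fun _ : Fin n => Set.pi Set.univ fun _ : Fin n =>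
      Set.Icc (-1 : ℝ) 1) :=
    isCompact_univ_pi fun _ => isCompact_univ_pi fun _ => isCompact_Icc
  obtain ⟨T, -, hT⟩ := hc.ultrafilter_le_nhds (U.map θ) (by
    refine tendsto_principal.2 (Eventually.of_forall fun k i _ j _ => ?_)
    have := entry_norm_bound_of_unitary (hθ k) i j
    rwa [Real.norm_eq_abs, abs_le] at this)
  change Matrix (Fin n) (Fin n) ℝ at T
  have hT' : Tendsto θ U (𝓝 T) := hT
  refine ⟨T, ?_, hT'⟩
  rw [Matrix.mem_orthogonalGroup_iff]
  have hcont : Continuous fun M : Matrix (Fin n) (Fin n) ℝ => M * M.transpose := by fun_prop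
  have h1 := (hcont.tendsto T).comp hT'
  refine tendsto_nhds_unique h1 (tendsto_const_nhds.congr fun k => ?_)
  exact ((Matrix.mem_orthogonalGroup_iff (Fin n) ℝ).1 (hθ k)).symm

lemma rmApply_eq_add {n : ℕ} (θ : Matrix (Fin n) (Fin n) ℝ) (ξ x : EuclideanSpace ℝ (Fin n)) :
    rmApply θ ξ x = ξ + rmApply θ 0 x := by
  simp [rmApply]

lemma tendsto_rmApply_zero {n : ℕ} {U : Filter ℕ} {θ : ℕ → Matrix (Fin n) (Fin n) ℝ}
    {T : Matrix (Fin n) (Fin n) ℝ} (h : Tendsto θ U (𝓝 T)) (x : EuclideanSpace ℝ (Fin n)) :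
    Tendsto (fun k => rmApply (θ k) 0 x) U (𝓝 (rmApply T 0 x)) := by
  have hc : Continuous fun M : Matrix (Fin n) (Fin n) ℝ => rmApply M 0 x := by
    unfold rmApply
    fun_prop
  exact (hc.tendsto T).comp h

/-- Packings into bricks with uniformly bounded sides and volume at most `V + 1/(k+1)` have a
limit, a packing into a brick of volume at most `V`. -/
lemma exists_limit_packing {n : ℕ} {ι : Type*} (A : ι → Set (EuclideanSpace ℝ (Fin n)))
    (V M : ℝ)
    (h : ∀ k : ℕ, ∃ s : Fin n → ℝ, (∀ m, 0 ≤ s m) ∧ (∀ m, s m ≤ M) ∧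
      ∏ m, s m ≤ V + 1 / ((k : ℝ) + 1) ∧ PacksInto A (brick 0 s)) :
    ∃ s : Fin n → ℝ, (∀ m, 0 ≤ s m) ∧ ∏ m, s m ≤ V ∧ PacksInto A (brick 0 s) := by
  choose s hs0 hsM hsV θ ξ hθ hsub hdisj using h
  let U : Ultrafilter ℕ := hyperfilter ℕ
  have hU : (U : Filter ℕ) ≤ atTop := Nat.hyperfilter_le_atTop
  obtain ⟨S, -, hS⟩ := (isCompact_Icc (a := (0 : Fin n → ℝ)) (b := fun _ => M)).ultrafilter_le_nhds
    (U.map s) (tendsto_principal.2 (Eventually.of_forall fun k => ⟨hs0 k, hsM k⟩))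
  have hS' : Tendsto s U (𝓝 S) := hS
  have hSm : ∀ m, Tendsto (fun k => s k m) U (𝓝 (S m)) := tendsto_pi_nhds.1 hS'
  choose T hT hTlim using fun i => exists_tendsto_orthogonal U (fun k => θ k i) fun k => hθ k i
  -- The translation parts of an empty `A i` are unconstrained and need not converge, so
  -- convergence is stated pointwise on `A i`.
  have hX : ∀ i, ∃ X, ∀ x ∈ A i,
      Tendsto (fun k => rmApply (θ k i) (ξ k i) x) U (𝓝 (rmApply (T i) X x)) := by
    intro i
    rcases (A i).eq_empty_or_nonempty with hA | ⟨p, hp⟩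
    · exact ⟨0, by simp [hA]⟩
    obtain ⟨q, -, hq⟩ := (isCompact_brick (0 : Fin n → ℝ) fun _ => M).ultrafilter_le_nhds
      (U.map fun k => rmApply (θ k i) (ξ k i) p)
      (tendsto_principal.2 (Eventually.of_forall fun k m => by
        have := hsub k i ⟨p, hp, rfl⟩ m
        exact ⟨this.1, this.2.trans (hsM k m)⟩))
    have hq' : Tendsto (fun k => rmApply (θ k i) (ξ k i) p) U (𝓝 q) := hq
    refine ⟨q - rmApply (T i) 0 p, fun x _ => ?_⟩
    have h1 := (hq'.sub (tendsto_rmApply_zero (hTlim i) p)).add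
      (tendsto_rmApply_zero (hTlim i) x)
    rw [rmApply_eq_add]
    refine h1.congr fun k => ?_
    rw [rmApply_eq_add _ (ξ k i) p, rmApply_eq_add _ (ξ k i) x]
    abel
  choose X hXlim using hX
  refine ⟨S, fun m => ge_of_tendsto' (hSm m) fun k => hs0 k m, ?_, T, X, hT, ?_, ?_⟩
  · have h1 : Tendsto (fun k => ∏ m, s k m) U (𝓝 (∏ m, S m)) :=
      tendsto_finsetProd _ fun m _ => hSm m
    have h2 : Tendsto (fun k : ℕ => V + 1 / ((k : ℝ) + 1)) U (𝓝 (V + 0)) :=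
      (tendsto_const_nhds.add tendsto_one_div_add_atTop_nhds_zero_nat).mono_left hU
    rw [add_zero] at h2
    exact le_of_tendsto_of_tendsto' h1 h2 hsV
  · rintro i _ ⟨x, hx, rfl⟩ m
    have hcoord : Continuous fun y : EuclideanSpace ℝ (Fin n) => y m := by fun_prop
    have h1 : Tendsto (fun k => rmApply (θ k i) (ξ k i) x m) U (𝓝 (rmApply (T i) (X i) x m)) :=
      (hcoord.tendsto _).comp (hXlim i x hx)
    exact ⟨ge_of_tendsto' h1 fun k => (hsub k i ⟨x, hx, rfl⟩ m).1,
      le_of_tendsto_of_tendsto' h1 (hSm m) fun k => (hsub k i ⟨x, hx, rfl⟩ m).2⟩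
  · intro i j hij
    rw [Set.eq_empty_iff_forall_notMem]
    rintro x ⟨hxi, hxj⟩
    obtain ⟨p, r, hr, hpx, hpA⟩ := exists_ball_of_mem_interior_image (hT i) (X i) hxi
    obtain ⟨q, t, ht, hqx, hqA⟩ := exists_ball_of_mem_interior_image (hT j) (X j) hxj
    have h1 := hXlim i p (hpA (Metric.mem_ball_self hr))
    have h2 := hXlim j q (hqA (Metric.mem_ball_self ht))
    rw [hpx] at h1
    rw [hqx] at h2
    obtain ⟨k, hk1, hk2⟩ :=
      ((h1.eventually (Metric.ball_mem_nhds x hr)).and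
        (h2.eventually (Metric.ball_mem_nhds x ht))).exists
    have hk3 := hdisj k hij
    refine Set.eq_empty_iff_forall_notMem.1 hk3 x ⟨?_, ?_⟩
    · exact mem_interior.2 ⟨_, ball_subset_image (hθ k i) (ξ k i) hpA, Metric.isOpen_ball,
        Metric.mem_ball_comm.1 hk1⟩
    · exact mem_interior.2 ⟨_, ball_subset_image (hθ k j) (ξ k j) hqA, Metric.isOpen_ball,
        Metric.mem_ball_comm.1 hk2⟩

/-! ### Bounding the sides -/

lemma le_side_of_ball_subset {n : ℕ} {a b : Fin n → ℝ} {c : EuclideanSpace ℝ (Fin n)} {r : ℝ}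
    (hr : 0 < r) (h : Metric.ball c r ⊆ brick a b) (m : Fin n) : r ≤ b m - a m := by
  have hmem : ∀ t : ℝ, |t| < r → c + EuclideanSpace.single m t ∈ brick a b := fun t ht =>
    h (by simpa [Metric.mem_ball, dist_eq_norm] using ht)
  have h1 := (hmem (r / 2) (by rw [abs_of_pos (by positivity)]; linarith) m).2
  have h2 := (hmem (-(r / 2)) (by rw [abs_neg, abs_of_pos (by positivity)]; linarith) m).1
  simp at h1 h2
  linarith

lemma side_le_of_prod_le {n : ℕ} {s : Fin n → ℝ} {r W : ℝ} (hr : 0 < r) (hs : ∀ m, r ≤ s m)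
    (hW : ∏ m, s m ≤ W) (m : Fin n) : s m ≤ W / r ^ (n - 1) := by
  rw [le_div_iff₀ (by positivity)]
  refine le_trans ?_ hW
  rw [← Finset.mul_prod_erase Finset.univ s (Finset.mem_univ m)]
  refine mul_le_mul_of_nonneg_left ?_ (hr.le.trans (hs m))
  have : r ^ (n - 1) = ∏ _l ∈ Finset.univ.erase m, r := by
    simp [Finset.card_erase_of_mem]
  rw [this]
  exact Finset.prod_le_prod (fun _ _ => hr.le) fun l _ => hs l

/-- Sets with empty interior may overlap freely, so each one can be pushed into the corner of the
brick; only the part of the brick of side at most a common diameter bound `D` is then used. -/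
lemma packsInto_truncate {n : ℕ} {ι : Type*} {A : ι → Set (EuclideanSpace ℝ (Fin n))} {D : ℝ}
    (hA : ∀ i, interior (A i) = ∅) (hD : ∀ i, ∀ x ∈ A i, ∀ y ∈ A i, dist x y ≤ D)
    {a b : Fin n → ℝ} (h : PacksInto A (brick a b)) :
    PacksInto A (brick 0 fun m => min (b m - a m) D) := by
  obtain ⟨θ, ξ, h1, h2, -⟩ := h
  let c : ι → EuclideanSpace ℝ (Fin n) := fun i =>
    WithLp.toLp 2 fun m => sInf ((fun x => rmApply (θ i) (ξ i) x m) '' A i)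
  refine ⟨θ, fun i => ξ i - c i, h1, ?_, ?_⟩
  · rintro i _ ⟨x, hx, rfl⟩ m
    have hm : rmApply (θ i) (ξ i - c i) x m = rmApply (θ i) (ξ i) x m -
        sInf ((fun x => rmApply (θ i) (ξ i) x m) '' A i) := by
      rw [rmApply_apply, rmApply_apply]
      simp only [c, PiLp.sub_apply]
      ring
    rw [hm]
    have hbdd : BddBelow ((fun x => rmApply (θ i) (ξ i) x m) '' A i) := by
      refine ⟨a m, ?_⟩
      rintro _ ⟨y, hy, rfl⟩
      exact (h2 i ⟨y, hy, rfl⟩ m).1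
    have hle := csInf_le hbdd ⟨x, hx, rfl⟩
    refine ⟨by simpa using hle, ?_⟩
    have hlow : rmApply (θ i) (ξ i) x m - min (b m - a m) D ≤
        sInf ((fun x => rmApply (θ i) (ξ i) x m) '' A i) := by
      refine le_csInf ⟨_, x, hx, rfl⟩ ?_
      rintro _ ⟨y, hy, rfl⟩
      rw [sub_le_comm]
      refine le_min ?_ ?_
      · have e1 := (h2 i ⟨x, hx, rfl⟩ m).2
        have e2 := (h2 i ⟨y, hy, rfl⟩ m).1
        linarith
      · obtain ⟨e, he⟩ := exists_isometryEquiv (h1 i) (ξ i)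
        have e1 : dist (rmApply (θ i) (ξ i) x) (rmApply (θ i) (ξ i) y) ≤ D := by
          rw [← he, e.dist_eq]
          exact hD i x hx y hy
        have e2 := PiLp.norm_apply_le (rmApply (θ i) (ξ i) x - rmApply (θ i) (ξ i) y) m
        rw [← dist_eq_norm, PiLp.sub_apply, Real.norm_eq_abs] at e2
        exact (le_abs_self _).trans (e2.trans e1)
    simp only
    linarith
  · intro i j _
    rw [Set.eq_empty_iff_forall_notMem]
    rintro x ⟨hx, -⟩
    obtain ⟨p, r, hr, -, hp⟩ := exists_ball_of_mem_interior_image (h1 i) _ hx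
    have : p ∈ interior (A i) :=
      mem_interior.2 ⟨_, hp, Metric.isOpen_ball, Metric.mem_ball_self hr⟩
    simp [hA i] at this

lemma exists_diam_bound {n : ℕ} {ι : Type*} {A : ι → Set (EuclideanSpace ℝ (Fin n))}
    {a b : Fin n → ℝ} (h : PacksInto A (brick a b)) :
    ∃ D, 0 ≤ D ∧ ∀ i, ∀ x ∈ A i, ∀ y ∈ A i, dist x y ≤ D := by
  obtain ⟨θ, ξ, h1, h2, -⟩ := h
  refine ⟨Metric.diam (brick a b), Metric.diam_nonneg, fun i x hx y hy => ?_⟩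
  obtain ⟨e, he⟩ := exists_isometryEquiv (h1 i) (ξ i)
  rw [← e.dist_eq, he]
  exact Metric.dist_le_diam_of_mem (isCompact_brick a b).isBounded (h2 i ⟨x, hx, rfl⟩)
    (h2 i ⟨y, hy, rfl⟩)

lemma exists_enlarge {n : ℕ} (hn : n ≠ 0) {s : Fin n → ℝ} (hs : ∀ m, 0 ≤ s m) {V : ℝ}
    (hV : 0 ≤ V) (hsV : ∏ m, s m ≤ V) : ∃ t, 0 ≤ t ∧ ∏ m, (s m + t) = V := by
  have hc : ContinuousOn (fun t : ℝ => ∏ m, (s m + t)) (Set.Icc 0 (V + 1)) := by fun_prop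
  have h1 : V ≤ ∏ m, (s m + (V + 1)) := by
    calc V ≤ V + 1 := by linarith
      _ ≤ (V + 1) ^ n := le_self_pow₀ (by linarith) hn
      _ = ∏ _m : Fin n, (V + 1) := by simp
      _ ≤ _ := Finset.prod_le_prod (fun _ _ => by linarith) fun m _ => by linarith [hs m]
  obtain ⟨t, ht, htV⟩ := intermediate_value_Icc (by linarith) hc ⟨by simpa using hsV, h1⟩
  exact ⟨t, ht.1, htV⟩

/-- **Theorem 2 (first part).** If for every `ε > 0` there exists a packing of `A` into
some brick of volume `V + ε`, then there exists a packing of `A` into a brick of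
volume `V`. -/
theorem packing_of_bricks {n : ℕ} {ι : Type*} (A : ι → Set (EuclideanSpace ℝ (Fin n)))
    (V : ℝ) (hV : 0 ≤ V)
    (h : ∀ ε : ℝ, 0 < ε → ∃ a b : Fin n → ℝ, (∀ m, a m ≤ b m) ∧
      (∏ m, (b m - a m)) = V + ε ∧ PacksInto A (brick a b)) :
    ∃ a b : Fin n → ℝ, (∀ m, a m ≤ b m) ∧
      (∏ m, (b m - a m)) = V ∧ PacksInto A (brick a b) := by
  rcases eq_or_ne n 0 with rfl | hn
  · -- The empty product is `1`, which cannot equal both `V + 1` and `V + 2`.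
    obtain ⟨_, _, -, h1, -⟩ := h 1 one_pos
    obtain ⟨_, _, -, h2, -⟩ := h 2 two_pos
    simp at h1 h2
    linarith
  obtain ⟨s, hs0, hsV, hsP⟩ : ∃ s : Fin n → ℝ, (∀ m, 0 ≤ s m) ∧ ∏ m, s m ≤ V ∧
      PacksInto A (brick 0 s) := by
    by_cases hA : ∀ i, interior (A i) = ∅
    · obtain ⟨_, _, -, -, hP⟩ := h 1 one_pos
      obtain ⟨D, hD0, hD⟩ := exists_diam_bound hP
      refine exists_limit_packing A V D fun k => ?_
      obtain ⟨a, b, hab, hvol, hP⟩ := h (1 / ((k : ℝ) + 1)) (by positivity)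
      have hnn : ∀ m, 0 ≤ min (b m - a m) D := fun m => le_min (sub_nonneg.2 (hab m)) hD0
      refine ⟨fun m => min (b m - a m) D, hnn, fun m => min_le_right _ _, ?_,
        packsInto_truncate hA hD hP⟩
      rw [← hvol]
      exact Finset.prod_le_prod (fun m _ => hnn m) fun m _ => min_le_left _ _
    · push Not at hA
      obtain ⟨i, p, hp⟩ := hA
      obtain ⟨r, hr, hball⟩ := Metric.isOpen_iff.1 isOpen_interior p hp
      refine exists_limit_packing A V ((V + 1) / r ^ (n - 1)) fun k => ?_
      obtain ⟨a, b, hab, hvol, hP⟩ := h (1 / ((k : ℝ) + 1)) (by positivity)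
      refine ⟨b - a, fun m => sub_nonneg.2 (hab m), ?_, hvol.le, hP.translate⟩
      obtain ⟨θ, ξ, h1, h2, -⟩ := hP
      have hsub := (ball_subset_image (h1 i) (ξ i) (hball.trans interior_subset)).trans (h2 i)
      refine side_le_of_prod_le hr (le_side_of_ball_subset hr hsub) ?_
      simp only [Pi.sub_apply, hvol]
      have : 1 / ((k : ℝ) + 1) ≤ 1 := by
        rw [div_le_one (by positivity)]
        linarith [Nat.cast_nonneg (α := ℝ) k]
      linarith
  obtain ⟨t, ht, htV⟩ := exists_enlarge hn hs0 hV hsV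
  refine ⟨0, fun m => s m + t, fun m => add_nonneg (hs0 m) ht, by simpa using htV,
    hsP.mono fun x hx m => ⟨(hx m).1, (hx m).2.trans (by linarith)⟩⟩
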